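/- Let TS=(S,Σ,→,s₀) be a finite, reachable, deterministic LTS that is solved by some Petri net with weighted comparable presets (WPI), and let a,b∈Σ be labels with a≡b. Then there exists a WPI Petri net N'=(P,T,W',M₀) solving TS in which a and b have identical presets including arc weights, i.e., W'(p,a)=W'(p,b) for all places p. -/

import Mathlib

section Defs

variable {S L P T : Type*}

/-- `enab tr s a` means the label `a` is enabled at state `s`, i.e. `s[a⟩`. -/
def enab (tr : S → L → S → Prop) (s : S) (a : L) : Prop := ∃ s', tr s a s'

/-- The LTS is deterministic. -/
def Deterministic (tr : S → L → S → Prop) : Prop :=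
  ∀ s a s' s'', tr s a s' → tr s a s'' → s' = s''

/-- `Walk tr s σ s'` : a walk from `s` to `s'` labelled by the word `σ`. -/
inductive Walk (tr : S → L → S → Prop) : S → List L → S → Prop
  | nil (s : S) : Walk tr s [] s
  | cons {s s' s'' : S} {a : L} {σ : List L} :
      tr s a s' → Walk tr s' σ s'' → Walk tr s (a :: σ) s''

/-- `s` is reachable from `s₀`. -/
def ReachableState (tr : S → L → S → Prop) (s₀ s : S) : Prop := ∃ σ, Walk tr s₀ σ s

/-- Every state is reachable from the initial state `s₀`. -/
def ReachableLTS (tr : S → L → S → Prop) (s₀ : S) : Prop := ∀ s, ReachableState tr s₀ s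

/-- `a ≡ b` : `a` and `b` are enabled at exactly the same states. -/
def lequiv (tr : S → L → S → Prop) (a b : L) : Prop := ∀ s, enab tr s a ↔ enab tr s b

/-- `a ▷ b` : wherever `a` is enabled so is `b`, and somewhere `b` is enabled but not `a`. -/
def limpl (tr : S → L → S → Prop) (a b : L) : Prop :=
  (∀ s, enab tr s a → enab tr s b) ∧ ∃ s, enab tr s b ∧ ¬ enab tr s a

/-- `a ⋈ b` : `a ▷ b` or `b ▷ a`. -/
def lbowtie (tr : S → L → S → Prop) (a b : L) : Prop := limpl tr a b ∨ limpl tr b a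

/-- `a ∥ b` : somewhere `a` but not `b` is enabled, and somewhere `b` but not `a`. -/
def linter (tr : S → L → S → Prop) (a b : L) : Prop :=
  (∃ s, enab tr s a ∧ ¬ enab tr s b) ∧ (∃ s, enab tr s b ∧ ¬ enab tr s a)

/-- Deactivation relation `a ⊲⊳ b`: one of the labels can deactivate the other. -/
def ldeact (tr : S → L → S → Prop) (a b : L) : Prop :=
  ∃ s s', (enab tr s a ∧ tr s b s' ∧ ¬ enab tr s' a) ∨
          (enab tr s b ∧ tr s a s' ∧ ¬ enab tr s' b)

/-- A Petri net over places `P` and transitions `T`: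
`Wpt p t = W(p,t)`, `Wtp t p = W(t,p)`, `M0` the initial marking. -/
structure PetriNet (P T : Type*) where
  Wpt : P → T → ℕ
  Wtp : T → P → ℕ
  M0 : P → ℕ

/-- A marking `M` enables a transition `t`. -/
def PetriNet.enables (N : PetriNet P T) (M : P → ℕ) (t : T) : Prop :=
  ∀ p, N.Wpt p t ≤ M p

/-- The marking resulting from firing `t` at `M`. -/
def PetriNet.fire (N : PetriNet P T) (M : P → ℕ) (t : T) : P → ℕ :=
  fun p => M p - N.Wpt p t + N.Wtp t p

/-- One firing step between markings. -/
def PetriNet.step (N : PetriNet P T) (M M' : P → ℕ) : Prop :=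
  ∃ t, N.enables M t ∧ M' = N.fire M t

/-- The marking `M` is reachable from the initial marking. -/
def PetriNet.reach (N : PetriNet P T) (M : P → ℕ) : Prop :=
  Relation.ReflTransGen N.step N.M0 M

/-- `N` solves the LTS given by `tr` and initial state `s₀`: there is a bijection `ζ`
from the states onto the reachable markings with `ζ s₀ = M₀` preserving edges both ways. -/
def Solves (N : PetriNet P T) (tr : S → T → S → Prop) (s₀ : S) : Prop :=
  ∃ ζ : S → (P → ℕ),
    Function.Injective ζ ∧
    (∀ M, N.reach M ↔ ∃ s, ζ s = M) ∧
    ζ s₀ = N.M0 ∧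
    ∀ s s' t, tr s t s' ↔ (N.enables (ζ s) t ∧ N.fire (ζ s) t = ζ s')

/-- The preset `•t` of a transition. -/
def PetriNet.preset (N : PetriNet P T) (t : T) : Set P := {p | 0 < N.Wpt p t}

/-- The postset `p^•` of a place. -/
def PetriNet.postset (N : PetriNet P T) (p : P) : Set T := {t | 0 < N.Wpt p t}

/-- `•T'` for a set of transitions `T'`. -/
def PetriNet.presetSet (N : PetriNet P T) (T' : Set T) : Set P :=
  {p | ∃ t ∈ T', 0 < N.Wpt p t}

/-- All arc weights are at most 1. -/
def PetriNet.plain (N : PetriNet P T) : Prop :=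
  ∀ p t, N.Wpt p t ≤ 1 ∧ N.Wtp t p ≤ 1

/-- Weighted comparable presets: transitions with intersecting presets have comparable presets. -/
def PetriNet.WPI (N : PetriNet P T) : Prop :=
  ∀ t t', (N.preset t ∩ N.preset t').Nonempty →
    (∀ p, N.Wpt p t ≤ N.Wpt p t') ∨ (∀ p, N.Wpt p t' ≤ N.Wpt p t)

/-- Weighted asymmetric choice. -/
def PetriNet.WAC (N : PetriNet P T) : Prop :=
  ∀ p p', (N.postset p ∩ N.postset p').Nonempty →
    (∀ t, N.Wpt p t ≤ N.Wpt p' t) ∨ (∀ t, N.Wpt p' t ≤ N.Wpt p t)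

/-- Equal conflict. -/
def PetriNet.EC (N : PetriNet P T) : Prop :=
  ∀ t t', (N.preset t ∩ N.preset t').Nonempty → ∀ p, N.Wpt p t = N.Wpt p t'

/-- Asymmetric choice: weighted asymmetric choice and plain. -/
def PetriNet.AC (N : PetriNet P T) : Prop := N.plain ∧ N.WAC

/-- Block-reduced asymmetric choice. -/
def PetriNet.BRAC (N : PetriNet P T) : Prop :=
  N.plain ∧ ∀ p p', (N.postset p ∩ N.postset p').Nonempty →
    N.postset p = N.postset p' ∨
    ∃ T1 T2 : Set T,
      (N.postset p = T1 ∧ N.postset p' = T1 ∪ T2 ∧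
        N.presetSet T1 = {p, p'} ∧ N.presetSet T2 = {p'}) ∨
      (N.postset p' = T1 ∧ N.postset p = T1 ∪ T2 ∧
        N.presetSet T1 = {p, p'} ∧ N.presetSet T2 = {p})

/-- Reduced asymmetric choice. -/
def PetriNet.RAC (N : PetriNet P T) : Prop :=
  N.plain ∧ ∀ p p', p ≠ p' → (N.postset p ∩ N.postset p').Nonempty →
    ((N.postset p).ncard = 1 ∧ (N.postset p').ncard ≤ 2 ∧
      N.presetSet (N.postset p') = {p, p'}) ∨
    ((N.postset p').ncard = 1 ∧ (N.postset p).ncard ≤ 2 ∧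
      N.presetSet (N.postset p) = {p, p'})

/-- A region `(R,B,F)` of the LTS given by `tr`. -/
def IsRegion (tr : S → L → S → Prop) (R : S → ℕ) (B F : L → ℕ) : Prop :=
  ∀ s a s', tr s a s' → B a ≤ R s ∧ R s' = R s - B a + F a

end Defs

/-!
If `•a` and `•b` meet, they are comparable, say `W(·,a) ≤ W(·,b)`; raising the weights of `a` to
those of `b` and raising the output weights of `a` by the same amounts keeps the effect of `a`, and
the enabledness of `a` does not change because `b` was enabled at the same reachable markings.
If `•a` and `•b` are disjoint, firing `a` cannot disable `b`, hence not `a` either, so `a` can fire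
forever once it is enabled. Then `a` never decreases a place, which leaves room to exchange its
preset for that of `b` without changing its effect.
-/

namespace PetriNet

variable {P T : Type*} {N N' : PetriNet P T} {M : P → ℕ} {a b t : T}

theorem reach.fire (hM : N.reach M) (ht : N.enables M t) : N.reach (N.fire M t) :=
  hM.tail ⟨t, ht, rfl⟩

/-- `N` and `N'` start at the same marking and have the same firings `M[t⟩M'` at every marking `M`
that is reachable in `N`; both then have the same reachability graph. -/
structure SameReachableFirings (N N' : PetriNet P T) : Prop where
  M0_eq : N'.M0 = N.M0
  firing_iff : ∀ M, N.reach M → ∀ t M',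
    (N'.enables M t ∧ N'.fire M t = M') ↔ (N.enables M t ∧ N.fire M t = M')

theorem SameReachableFirings.step_iff (h : SameReachableFirings N N') (hM : N.reach M)
    (M' : P → ℕ) : N'.step M M' ↔ N.step M M' := by
  simp only [step, eq_comm (a := M'), h.firing_iff M hM]

theorem SameReachableFirings.reach_iff (h : SameReachableFirings N N') (M : P → ℕ) :
    N'.reach M ↔ N.reach M := by
  constructor <;> intro hM
  · induction hM with
    | refl => exact h.M0_eq ▸ .refl
    | tail _ hstep ih => exact ih.tail ((h.step_iff ih _).1 hstep)
  · induction hM with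
    | refl => exact h.M0_eq ▸ .refl
    | tail hM hstep ih => exact ih.tail ((h.step_iff hM _).2 hstep)

theorem SameReachableFirings.solves {S : Type*} {tr : S → T → S → Prop} {s₀ : S}
    (h : SameReachableFirings N N') (hsol : Solves N tr s₀) : Solves N' tr s₀ := by
  obtain ⟨ζ, hinj, hreach, hinit, hedge⟩ := hsol
  refine ⟨ζ, hinj, fun M => (h.reach_iff M).trans (hreach M), hinit.trans h.M0_eq.symm, ?_⟩
  intro s s' t
  rw [hedge, h.firing_iff (ζ s) ((hreach _).2 ⟨s, rfl⟩)]

/-- The relation `a ≡ b` read in the reachability graph of `N`: the transitions `a` and `b` are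
enabled at the same reachable markings. -/
def Coenabled (N : PetriNet P T) (a b : T) : Prop :=
  ∀ M, N.reach M → (N.enables M a ↔ N.enables M b)

theorem enables_fire_of_disjoint_preset (hab : Disjoint (N.preset a) (N.preset b))
    (hb : N.enables M b) : N.enables (N.fire M a) b := by
  intro p
  have hp : 0 < N.Wpt p a → ¬ 0 < N.Wpt p b := fun hpa hpb => Set.disjoint_left.1 hab hpa hpb
  have hbp := hb p
  simp only [fire]
  omega

theorem Wpt_le_Wtp_of_fire_mem {I : Set (P → ℕ)} (hI : I.Nonempty)
    (henables : ∀ M ∈ I, N.enables M t) (hfire : ∀ M ∈ I, N.fire M t ∈ I) (p : P) :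
    N.Wpt p t ≤ N.Wtp t p := by
  obtain ⟨M, hM, hmin⟩ := (measure fun M : P → ℕ => M p).wf.has_min I hI
  have hle : M p ≤ M p - N.Wpt p t + N.Wtp t p := not_lt.1 (hmin _ (hfire M hM))
  have hen := henables M hM p
  omega

theorem Coenabled.Wpt_le_Wtp_of_disjoint_preset (hab : N.Coenabled a b)
    (hdisj : Disjoint (N.preset a) (N.preset b)) (hM : N.reach M) (ha : N.enables M a) (p : P) :
    N.Wpt p a ≤ N.Wtp a p := by
  refine Wpt_le_Wtp_of_fire_mem (I := {M | N.reach M ∧ N.enables M a}) ⟨M, hM, ha⟩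
    (fun _ h => h.2) ?_ p
  rintro M ⟨hM, ha⟩
  have hM' := hM.fire ha
  exact ⟨hM', (hab _ hM').2 (enables_fire_of_disjoint_preset hdisj ((hab M hM).1 ha))⟩

section CopyPreset

variable [DecidableEq T]

/-- The net obtained from `N` by giving `a` the preset of `b` and compensating in the output weights
of `a`, so that the effect of `a` is unchanged. The truncated subtraction achieves this only at the
places `p` with `W(p,a) ≤ W(p,b) + W(a,p)`. -/
def copyPreset (N : PetriNet P T) (a b : T) : PetriNet P T where
  Wpt p t := N.Wpt p (Function.update id a b t)
  Wtp := Function.update N.Wtp a fun p => N.Wpt p b + N.Wtp a p - N.Wpt p a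
  M0 := N.M0

theorem copyPreset_Wpt_eq (N : PetriNet P T) (a b : T) (p : P) :
    (N.copyPreset a b).Wpt p a = (N.copyPreset a b).Wpt p b := by
  by_cases h : b = a <;> simp [copyPreset, h]

theorem WPI.copyPreset (hN : N.WPI) (a b : T) : (N.copyPreset a b).WPI :=
  fun t t' => hN (Function.update id a b t) (Function.update id a b t')

theorem Coenabled.copyPreset_enables_iff (hab : N.Coenabled a b) (hM : N.reach M) (t : T) :
    (N.copyPreset a b).enables M t ↔ N.enables M t := by
  obtain rfl | h := eq_or_ne t a
  · simpa [copyPreset, enables] using (hab M hM).symm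
  · simp [copyPreset, enables, h]

theorem copyPreset_fire (ha : N.enables M a) (hb : N.enables M b)
    (hle : ∀ p, N.Wpt p a ≤ N.Wpt p b + N.Wtp a p) :
    (N.copyPreset a b).fire M a = N.fire M a := by
  funext p
  have hap := ha p
  have hbp := hb p
  have hlep := hle p
  simp only [copyPreset, fire, Function.update_self]
  omega

theorem copyPreset_fire_of_ne (h : t ≠ a) (M : P → ℕ) :
    (N.copyPreset a b).fire M t = N.fire M t := by
  funext p
  simp [copyPreset, fire, h]

theorem Coenabled.sameReachableFirings_copyPreset (hab : N.Coenabled a b)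
    (hle : ∀ M, N.reach M → N.enables M a → ∀ p, N.Wpt p a ≤ N.Wpt p b + N.Wtp a p) :
    SameReachableFirings N (N.copyPreset a b) where
  M0_eq := rfl
  firing_iff M hM t M' := by
    rw [hab.copyPreset_enables_iff hM]
    refine and_congr_right fun ht => ?_
    obtain rfl | h := eq_or_ne t a
    · rw [copyPreset_fire ht ((hab M hM).1 ht) (hle M hM ht)]
    · rw [copyPreset_fire_of_ne h]

end CopyPreset

end PetriNet

theorem Solves.coenabled_of_lequiv {S P T : Type*} {tr : S → T → S → Prop} {s₀ : S}
    {N : PetriNet P T} {a b : T} (hsol : Solves N tr s₀) (hab : lequiv tr a b) :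
    N.Coenabled a b := by
  obtain ⟨ζ, -, hreach, -, hedge⟩ := hsol
  have enab_iff (s : S) (t : T) : enab tr s t ↔ N.enables (ζ s) t := by
    refine ⟨fun ⟨s', h⟩ => ((hedge s s' t).1 h).1, fun ht => ?_⟩
    obtain ⟨s', hs'⟩ := (hreach _).1 (((hreach (ζ s)).2 ⟨s, rfl⟩).fire ht)
    exact ⟨s', (hedge s s' t).2 ⟨ht, hs'.symm⟩⟩
  intro M hM
  obtain ⟨s, rfl⟩ := (hreach M).1 hM
  rw [← enab_iff, ← enab_iff, hab s]

theorem equiv_labels_identical_presets_general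
    {S P L : Type*} (tr : S → L → S → Prop) (s₀ : S)
    (N : PetriNet P L) (hwpi : N.WPI) (hsol : Solves N tr s₀)
    (a b : L) (hab : lequiv tr a b) :
    ∃ N' : PetriNet P L, N'.M0 = N.M0 ∧ N'.WPI ∧ Solves N' tr s₀ ∧
      ∀ p : P, N'.Wpt p a = N'.Wpt p b := by
  classical
  wlog h : Disjoint (N.preset a) (N.preset b) ∨ ∀ p, N.Wpt p a ≤ N.Wpt p b generalizing a b
  · obtain ⟨hmeet, hnle⟩ := not_or.1 h
    have hba : ∀ p, N.Wpt p b ≤ N.Wpt p a :=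
      (hwpi a b (Set.not_disjoint_iff_nonempty_inter.1 hmeet)).resolve_left hnle
    obtain ⟨N', hM0, hwpi', hsol', heq⟩ := this b a (fun s => (hab s).symm) (.inr hba)
    exact ⟨N', hM0, hwpi', hsol', fun p => (heq p).symm⟩
  have hco : N.Coenabled a b := hsol.coenabled_of_lequiv hab
  have hle (M) (hM : N.reach M) (ha : N.enables M a) (p : P) :
      N.Wpt p a ≤ N.Wpt p b + N.Wtp a p := by
    rcases h with hdisj | hle
    · exact (hco.Wpt_le_Wtp_of_disjoint_preset hdisj hM ha p).trans (Nat.le_add_left _ _)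
    · exact (hle p).trans (Nat.le_add_right _ _)
  exact ⟨N.copyPreset a b, rfl, hwpi.copyPreset a b,
    (hco.sameReachableFirings_copyPreset hle).solves hsol, N.copyPreset_Wpt_eq a b⟩

/-- Case 3/4: If a WPI Petri net `N = (P,T,W,M₀)` solves a finite,
reachable, deterministic LTS and `a ≡ b`, then there is a WPI Petri net
`N' = (P,T,W',M₀)` solving the LTS with `W'(p,a) = W'(p,b)` for all places `p`. -/
theorem equiv_labels_identical_presets
    {S P L : Type*} [Fintype S] [Fintype L] [Finite P]
    (tr : S → L → S → Prop) (s₀ : S)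
    (hdet : Deterministic tr) (hreach : ReachableLTS tr s₀)
    (N : PetriNet P L) (hwpi : N.WPI) (hsol : Solves N tr s₀)
    (a b : L) (hab : lequiv tr a b) :
    ∃ N' : PetriNet P L, N'.M0 = N.M0 ∧ N'.WPI ∧ Solves N' tr s₀ ∧
      ∀ p : P, N'.Wpt p a = N'.Wpt p b :=
  equiv_labels_identical_presets_general tr s₀ N hwpi hsol a b hab
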